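/- Let m > 1 and q = 2^m. Then every linear MDS [q+1, q−2, 4]_q code is uniformly packed in the wide sense. Moreover, there exists a linear [q+1, q−2, 4]_q code that is completely regular. -/

import Mathlib

/-!
Write `q = 2 ^ m`, `n = q + 1`, `k = q - 2`. Every linear `[n, k, 4]_q` code `C` is in fact
completely regular, and a completely regular code is uniformly packed in the wide sense
(`CompletelyRegular.upws`).

For complete regularity, note that `C` is MDS, so that any `j ≤ k` coordinates of a codeword may be
prescribed and the number of codewords agreeing with `v` on a given `j`-set does not depend
on `v`. Double counting gives the first `k + 1` binomial moments of the numbers of agreements with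
`v`, and these determine all `B_{v,t}` from `B_{v,0}, B_{v,1}, B_{v,2}` (`numAt_eq_of_le_two`).
Since the minimum distance is four, these three numbers are obviously determined by `d(v, C)`,
except for `B_{v,2}` when `d(v, C) = 2`. In that case `B_{v,2} = q / 2` (`numAt_two_eq`); in
geometric terms, the columns of a parity check matrix form an oval in `PG(2, q)` with `q` even, and
a point off the oval that lies on a secant lies on exactly `q / 2` secants and one tangent. The
proof averages over the points of one secant, where evenness of `q` enters through the upper bound
`⌊(q + 1) / 2⌋ = q / 2` for the number of secants through a point.

The extended Reed–Solomon code shows that such codes exist (`exists_mds`).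
-/

open Finset

/-- The distance `d(v, C)` from a vector `v` to a code `C`. -/
noncomputable def distTo {n : ℕ} {F : Type*} [DecidableEq F] (C : Set (Fin n → F))
    (v : Fin n → F) : ℕ :=
  sInf (hammingDist v '' C)

/-- `numAt C v t` is the number `B_{v,t}` of codewords of `C` at Hamming
distance `t` from `v`. -/
noncomputable def numAt {n : ℕ} {F : Type*} [DecidableEq F] (C : Set (Fin n → F))
    (v : Fin n → F) (t : ℕ) : ℕ :=
  Set.ncard {c ∈ C | hammingDist v c = t}

/-- A code is completely regular if `B_{v,t}` depends only on `t` and `d(v,C)`. -/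
def CompletelyRegular {n : ℕ} {F : Type*} [DecidableEq F]
    (C : Set (Fin n → F)) : Prop :=
  ∀ u v : Fin n → F, distTo C u = distTo C v → ∀ t, numAt C u t = numAt C v t

/-- The covering radius `ρ` of a code. -/
noncomputable def coveringRadius {n : ℕ} {F : Type*} [DecidableEq F]
    (C : Set (Fin n → F)) : ℕ :=
  sSup (Set.range (distTo C))

/-- `C` is uniformly packed in the wide sense: there are rational packing
coefficients `β_0, …, β_ρ` with `∑ i, β i * B_{x,i} = 1` for every `x`. -/
def UPWS {n : ℕ} {F : Type*} [DecidableEq F] (C : Set (Fin n → F)) : Prop :=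
  ∃ β : ℕ → ℚ, ∀ x : Fin n → F,
    ∑ i ∈ Finset.range (coveringRadius C + 1), β i * (numAt C x i : ℚ) = 1

/-- `C` is a linear `[n, k, d]` code: a `k`-dimensional subspace of `F^n` such
that `d` is the least Hamming weight of a nonzero codeword. -/
def IsLinearCode {n : ℕ} {F : Type*} [Field F] [DecidableEq F]
    (C : Submodule F (Fin n → F)) (k d : ℕ) : Prop :=
  Module.finrank F C = k ∧
  IsLeast {w : ℕ | ∃ c ∈ C, c ≠ 0 ∧ hammingNorm c = w} d

/-- `C` is self-dual: it coincides with its Euclidean dual code. -/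
def SelfDual {n : ℕ} {F : Type*} [Field F]
    (C : Submodule F (Fin n → F)) : Prop :=
  (C : Set (Fin n → F)) = {x | ∀ v ∈ C, ∑ i, x i * v i = 0}

/-! ### Distances, and packing coefficients of a completely regular code -/

section General

variable {n : ℕ} {F : Type*} [DecidableEq F]

lemma numAt_eq_card [Fintype F] (C : Set (Fin n → F)) [DecidablePred (· ∈ C)]
    (v : Fin n → F) (t : ℕ) :
    numAt C v t = #{c | c ∈ C ∧ hammingDist v c = t} := by
  rw [numAt, ← Set.ncard_coe_finset]
  congr 1
  ext c
  simp

lemma distTo_le {C : Set (Fin n → F)} {c : Fin n → F} (hc : c ∈ C) (v : Fin n → F) :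
    distTo C v ≤ hammingDist v c :=
  Nat.sInf_le ⟨c, hc, rfl⟩

lemma exists_distTo {C : Set (Fin n → F)} (hC : C.Nonempty) (v : Fin n → F) :
    ∃ c ∈ C, hammingDist v c = distTo C v :=
  Nat.sInf_mem (hC.image _)

lemma numAt_eq_zero_of_lt {C : Set (Fin n → F)} {v : Fin n → F} {t : ℕ}
    (h : t < distTo C v) : numAt C v t = 0 := by
  have : {c ∈ C | hammingDist v c = t} = ∅ := by
    ext c
    simp only [Set.mem_ofPred_eq, Set.mem_empty_iff_false, iff_false, not_and]
    intro hc h1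
    have := distTo_le hc v
    omega
  rw [numAt, this, Set.ncard_empty]

lemma numAt_distTo_pos [Finite F] {C : Set (Fin n → F)} (hC : C.Nonempty) (v : Fin n → F) :
    0 < numAt C v (distTo C v) := by
  rw [numAt, Set.ncard_pos (Set.toFinite _)]
  obtain ⟨c, hc, h⟩ := exists_distTo hC v
  exact ⟨c, hc, h⟩

lemma distTo_le_coveringRadius {C : Set (Fin n → F)} (hC : C.Nonempty) (v : Fin n → F) :
    distTo C v ≤ coveringRadius C := by
  refine le_csSup ⟨n, ?_⟩ ⟨v, rfl⟩
  rintro _ ⟨x, rfl⟩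
  obtain ⟨c, hc⟩ := hC
  exact (distTo_le hc x).trans (by simpa using hammingDist_le_card_fintype (x := x) (y := c))

/-- Complete regularity makes the system for the packing coefficients triangular: `B_{x,i}`
vanishes for `i < d(x, C)` and is positive for `i = d(x, C)`, so the coefficients can be chosen
one by one, starting from the covering radius. -/
lemma CompletelyRegular.upws [Finite F] {C : Set (Fin n → F)} (hC : C.Nonempty)
    (h : CompletelyRegular C) : UPWS C := by
  set ρ := coveringRadius C with hρ
  have key : ∀ s : ℕ, ∃ β : ℕ → ℚ, ∀ x : Fin n → F, ρ < distTo C x + s →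
      ∑ i ∈ Finset.range (ρ + 1), β i * (numAt C x i : ℚ) = 1 := by
    intro s
    induction s with
    | zero =>
      refine ⟨0, fun x hx => ?_⟩
      have := distTo_le_coveringRadius hC x
      omega
    | succ s ih =>
      obtain ⟨β, hβ⟩ := ih
      by_cases hex : ∃ v, distTo C v + s = ρ
      · obtain ⟨v, hv⟩ := hex
        set d := distTo C v with hd
        have hpos : (numAt C v d : ℚ) ≠ 0 := by
          exact_mod_cast (numAt_distTo_pos hC v).ne'
        have hsum : ∀ (r : ℚ) (x : Fin n → F),
            ∑ i ∈ Finset.range (ρ + 1), (β i + Pi.single (M := fun _ => ℚ) d r i) * (numAt C x i : ℚ)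
              = ∑ i ∈ Finset.range (ρ + 1), β i * (numAt C x i : ℚ) + r * numAt C x d := by
          intro r x
          have hmem : d ∈ Finset.range (ρ + 1) := by simp; omega
          simp only [add_mul, Finset.sum_add_distrib]
          congr 1
          rw [Finset.sum_eq_single_of_mem d hmem]
          · simp
          · intro b _ hb
            simp [hb]
        refine ⟨fun i => β i + Pi.single (M := fun _ => ℚ) d
          ((1 - ∑ i ∈ Finset.range (ρ + 1), β i * (numAt C v i : ℚ)) / numAt C v d) i,
          fun x hx => ?_⟩
        rw [hsum]
        rcases eq_or_ne (distTo C x) d with he | he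
        · simp only [h x v he]
          field_simp
          ring
        · rw [numAt_eq_zero_of_lt (show d < distTo C x by omega), hβ x (by omega)]
          simp
      · refine ⟨β, fun x hx => hβ x ?_⟩
        have : distTo C x + s ≠ ρ := fun h => hex ⟨x, h⟩
        omega
  obtain ⟨β, hβ⟩ := key (ρ + 1)
  exact ⟨β, fun x => hβ x (by omega)⟩

lemma card_agree (v c : Fin n → F) : #{i | v i = c i} = n - hammingDist v c := by
  have := Finset.card_filter_add_card_filter_not (s := (univ : Finset (Fin n)))
    (p := fun i => v i = c i)
  simp only [Finset.card_univ, Fintype.card_fin] at this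
  simp only [hammingDist, ne_eq]
  omega

end General

/-! ### MDS codes of codimension three -/

section MDS

variable {n : ℕ} {F : Type*} [Field F] [DecidableEq F] {C : Submodule F (Fin n → F)}

lemma eq_of_hammingDist_lt (hd : ∀ c ∈ C, c ≠ 0 → 4 ≤ hammingNorm c)
    {c c' : Fin n → F} (hc : c ∈ C) (hc' : c' ∈ C) (h : hammingDist c c' < 4) : c = c' := by
  by_contra hne
  have := hd _ (C.add_mem (C.neg_mem hc) hc') (by rwa [ne_eq, neg_add_eq_zero])
  rw [hammingDist_eq_hammingNorm] at h
  omega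

/-- Any `k = n - 3` positions form an information set: since no nonzero codeword is supported on
the other three, restriction to them is injective, hence surjective. So the entries of a codeword
at up to `k` positions can be prescribed. -/
lemma exists_mem_eqOn (hk : Module.finrank F C + 3 = n)
    (hd : ∀ c ∈ C, c ≠ 0 → 4 ≤ hammingNorm c) (T : Finset (Fin n)) (hT : #T + 3 ≤ n)
    (v : Fin n → F) : ∃ c ∈ C, ∀ i ∈ T, c i = v i := by
  obtain ⟨S, hTS, hS⟩ := Finset.exists_superset_card_eq (s := T) (n := n - 3) (by omega)
    (by simp)
  let f : C →ₗ[F] (S → F) := (LinearMap.funLeft F F (Subtype.val : S → Fin n)).comp C.subtype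
  have hf : Function.Injective f := by
    rw [injective_iff_map_eq_zero]
    rintro ⟨c, hc⟩ h0
    by_contra hne
    have h4 := hd c hc (by simpa using hne)
    have : hammingNorm c ≤ #Sᶜ := by
      refine Finset.card_le_card fun i hi => ?_
      simp only [Finset.mem_filter, Finset.mem_univ, true_and] at hi
      rw [Finset.mem_compl]
      intro hiS
      exact hi (congrFun h0 ⟨i, hiS⟩)
    rw [Finset.card_compl, Fintype.card_fin] at this
    omega
  have hs : Function.Surjective f :=
    (LinearMap.injective_iff_surjective_of_finrank_eq_finrank (by
      rw [Module.finrank_pi, Fintype.card_coe]; omega)).1 hf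
  obtain ⟨⟨c, hc⟩, h⟩ := hs (fun i => v i)
  exact ⟨c, hc, fun i hi => congrFun h ⟨i, hTS hi⟩⟩

open Classical in
lemma card_agree_eq [Fintype F] (hk : Module.finrank F C + 3 = n)
    (hd : ∀ c ∈ C, c ≠ 0 → 4 ≤ hammingNorm c) (T : Finset (Fin n)) (hT : #T + 3 ≤ n)
    (u v : Fin n → F) :
    #{c | c ∈ C ∧ ∀ i ∈ T, u i = c i} = #{c | c ∈ C ∧ ∀ i ∈ T, v i = c i} := by
  obtain ⟨w, hw, h⟩ := exists_mem_eqOn hk hd T hT (v - u)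
  refine Finset.card_equiv (Equiv.addRight w) fun c => ?_
  simp only [Finset.mem_filter, Finset.mem_univ, true_and, Equiv.coe_addRight, Pi.add_apply]
  rw [C.add_mem_iff_left hw]
  refine and_congr_right fun _ => forall₂_congr fun i hi => ?_
  rw [h i hi, Pi.sub_apply]
  constructor
  · intro h; rw [h]; ring
  · intro h; linear_combination h

open Classical in
/-- The `j`-th binomial moment of the agreement numbers between `v` and the codewords counts pairs
of a codeword and a `j`-set on which it agrees with `v`; for `j ≤ k` it does not depend
on `v`. -/
lemma sum_choose_eq [Fintype F] (hk : Module.finrank F C + 3 = n)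
    (hd : ∀ c ∈ C, c ≠ 0 → 4 ≤ hammingNorm c) (j : ℕ) (hj : j + 3 ≤ n)
    (u v : Fin n → F) :
    ∑ c with c ∈ C, (n - hammingDist u c).choose j
      = ∑ c with c ∈ C, (n - hammingDist v c).choose j := by
  have key : ∀ v : Fin n → F, ∑ c with c ∈ C, (n - hammingDist v c).choose j
      = ∑ T ∈ powersetCard j univ, #{c | c ∈ C ∧ ∀ i ∈ T, v i = c i} := by
    intro v
    have h1 : ∀ c, (n - hammingDist v c).choose j
        = #(Finset.bipartiteAbove (fun (c : Fin n → F) (T : Finset (Fin n)) =>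
            ∀ i ∈ T, v i = c i) (powersetCard j univ) c) := by
      intro c
      rw [← card_agree, ← Finset.card_powersetCard]
      congr 1
      ext T
      simp only [mem_powersetCard, subset_iff, mem_filter, mem_univ, true_and,
        bipartiteAbove]
      tauto
    simp_rw [h1]
    rw [Finset.sum_card_bipartiteAbove_eq_sum_card_bipartiteBelow]
    refine Finset.sum_congr rfl fun T _ => ?_
    rw [bipartiteBelow, Finset.filter_filter]
  rw [key, key]
  refine Finset.sum_congr rfl fun T hT => card_agree_eq hk hd T ?_ u v
  rw [(mem_powersetCard.1 hT).2]
  exact hj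

lemma sum_numAt_mul_choose [Fintype F] (hk : Module.finrank F C + 3 = n)
    (hd : ∀ c ∈ C, c ≠ 0 → 4 ≤ hammingNorm c) (j : ℕ) (hj : j + 3 ≤ n)
    (u v : Fin n → F) :
    ∑ t ∈ range (n + 1), numAt (C : Set (Fin n → F)) u t * (n - t).choose j
      = ∑ t ∈ range (n + 1), numAt (C : Set (Fin n → F)) v t * (n - t).choose j := by
  classical
  have key : ∀ v : Fin n → F,
      ∑ t ∈ range (n + 1), numAt (C : Set (Fin n → F)) v t * (n - t).choose j
        = ∑ c with c ∈ C, (n - hammingDist v c).choose j := by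
    intro v
    rw [← Finset.sum_fiberwise_of_maps_to (g := fun c => hammingDist v c) (t := range (n + 1))]
    · refine Finset.sum_congr rfl fun t _ => ?_
      rw [numAt_eq_card, Finset.filter_filter, ← smul_eq_mul, ← Finset.sum_const]
      refine Finset.sum_congr (by simp) fun c hc => ?_
      simp only [mem_filter, mem_univ, true_and] at hc
      rw [hc.2]
    · intro c _
      have := hammingDist_le_card_fintype (x := v) (y := c)
      simp only [Fintype.card_fin] at this
      simp only [mem_range]
      omega
  rw [key, key, sum_choose_eq hk hd j hj]

/-- The first three numbers `B_{v,0}, B_{v,1}, B_{v,2}` determine all the others, because the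
equations given by the binomial moments of order `j = n - t` are triangular. -/
lemma numAt_eq_of_le_two [Fintype F] (hk : Module.finrank F C + 3 = n)
    (hd : ∀ c ∈ C, c ≠ 0 → 4 ≤ hammingNorm c) (u v : Fin n → F)
    (h : ∀ t ≤ 2, numAt (C : Set (Fin n → F)) u t = numAt (C : Set (Fin n → F)) v t) (t : ℕ) :
    numAt (C : Set (Fin n → F)) u t = numAt (C : Set (Fin n → F)) v t := by
  classical
  induction t using Nat.strong_induction_on with
  | _ t ih =>
    rcases Nat.lt_or_ge t 3 with ht | ht
    · exact h t (by omega)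
    rcases Nat.lt_or_ge n t with htn | htn
    · have hz : ∀ v : Fin n → F, numAt (C : Set (Fin n → F)) v t = 0 := by
        intro v
        rw [numAt_eq_card, Finset.card_eq_zero, Finset.filter_eq_empty_iff]
        rintro c - ⟨-, hc⟩
        have := hammingDist_le_card_fintype (x := v) (y := c)
        simp only [Fintype.card_fin] at this
        omega
      rw [hz, hz]
    have hs := sum_numAt_mul_choose hk hd (n - t) (by omega) u v
    have hsplit : ∀ v : Fin n → F,
        ∑ s ∈ range (n + 1), numAt (C : Set (Fin n → F)) v s * (n - s).choose (n - t)
          = ∑ s ∈ range t, numAt (C : Set (Fin n → F)) v s * (n - s).choose (n - t)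
            + numAt (C : Set (Fin n → F)) v t := by
      intro v
      rw [← Finset.sum_subset (Finset.range_subset_range.2 (show t + 1 ≤ n + 1 by omega)),
        Finset.sum_range_succ, Nat.choose_self, mul_one]
      intro s hs hs'
      simp only [mem_range] at hs hs'
      rw [Nat.choose_eq_zero_of_lt (by omega), mul_zero]
    rw [hsplit, hsplit, Finset.sum_congr rfl fun s hs => by
      rw [ih s (mem_range.1 hs)]] at hs
    exact Nat.add_left_cancel hs

open Classical in
/-- Distinct codewords at distance two from `v` are at distance at least four from each other, so
they differ from `v` on disjoint pairs of positions, and there are at most `n / 2` of them. -/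
lemma two_mul_numAt_two_le [Fintype F] (hd : ∀ c ∈ C, c ≠ 0 → 4 ≤ hammingNorm c)
    (v : Fin n → F) : 2 * numAt (C : Set (Fin n → F)) v 2 ≤ n := by
  rw [numAt_eq_card]
  have hdisj : ∀ c ∈ ({c | c ∈ (C : Set (Fin n → F)) ∧ hammingDist v c = 2} : Finset _),
      ∀ c' ∈ ({c | c ∈ (C : Set (Fin n → F)) ∧ hammingDist v c = 2} : Finset _), c ≠ c' →
      Disjoint ({i | v i ≠ c i} : Finset (Fin n)) ({i | v i ≠ c' i} : Finset (Fin n)) := by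
    intro c hc c' hc' hne
    simp only [mem_filter, mem_univ, true_and, SetLike.mem_coe] at hc hc'
    rw [Finset.disjoint_iff_inter_eq_empty, ← Finset.card_eq_zero]
    by_contra h0
    apply hne
    apply eq_of_hammingDist_lt hd hc.1 hc'.1
    have h1 : hammingDist c c' ≤
        #(({i | v i ≠ c i} : Finset (Fin n)) ∪ ({i | v i ≠ c' i} : Finset (Fin n))) := by
      refine Finset.card_le_card fun i hi => ?_
      simp only [mem_union, mem_filter, mem_univ, true_and] at hi ⊢
      by_contra! h
      exact hi (h.1.symm.trans h.2)
    have h2 := Finset.card_union_add_card_inter ({i | v i ≠ c i} : Finset (Fin n))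
      ({i | v i ≠ c' i} : Finset (Fin n))
    have h3 : #({i | v i ≠ c i} : Finset (Fin n)) = 2 := hc.2
    have h4 : #({i | v i ≠ c' i} : Finset (Fin n)) = 2 := hc'.2
    omega
  have h := Finset.card_biUnion hdisj
  rw [Finset.sum_congr rfl (g := fun _ => 2) (fun c hc => by
    simp only [mem_filter, mem_univ, true_and] at hc
    exact hc.2), Finset.sum_const, smul_eq_mul] at h
  rw [mul_comm, ← h]
  exact (Finset.card_le_univ _).trans (by simp)

/-- A vector `v` at distance two from the code has exactly `q / 2` codewords at distance two.
If `c` is one of them, differing from `v` at `i` and `j`, replace the `j`-th entry of `v` by all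
values `y ≠ c j`. Every pair of positions other than `i, j` is the difference set of a codeword
from one of these `q - 1` vectors, and `{i, j}` is a difference set for each; so the bound
`q / 2` must be attained every time. -/
lemma numAt_two_eq [Fintype F] (hk : Module.finrank F C + 3 = n)
    (hd : ∀ c ∈ C, c ≠ 0 → 4 ≤ hammingNorm c) (hn : n = Fintype.card F + 1)
    (heven : Even (Fintype.card F)) (v : Fin n → F)
    (hv : distTo (C : Set (Fin n → F)) v = 2) :
    2 * numAt (C : Set (Fin n → F)) v 2 = Fintype.card F := by
  classical
  have hub : ∀ w : Fin n → F, 2 * numAt (C : Set (Fin n → F)) w 2 ≤ Fintype.card F := by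
    intro w
    have := two_mul_numAt_two_le hd w
    obtain ⟨r, hr⟩ := heven
    omega
  obtain ⟨c, hc, hcv⟩ := exists_distTo (C := (C : Set (Fin n → F))) ⟨0, C.zero_mem⟩ v
  rw [hv] at hcv
  obtain ⟨i, j, hij, hD⟩ := Finset.card_eq_two.1 hcv
  have hmem : ∀ l, v l ≠ c l ↔ l = i ∨ l = j := by
    intro l
    have := congrArg (l ∈ ·) hD
    simpa using this
  -- `P w` is the family of difference sets of the codewords at distance two from `w`.
  let P : (Fin n → F) → Finset (Finset (Fin n)) := fun w =>
    ({c | c ∈ (C : Set (Fin n → F)) ∧ hammingDist w c = 2} : Finset _).image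
      fun c => ({l | w l ≠ c l} : Finset (Fin n))
  have hP : ∀ w, #(P w) ≤ numAt (C : Set (Fin n → F)) w 2 := by
    intro w
    rw [numAt_eq_card]
    exact Finset.card_image_le
  have hPij : ∀ y ≠ c j, ({i, j} : Finset (Fin n)) ∈ P (Function.update v j y) := by
    intro y hy
    have hset : ({l | Function.update v j y l ≠ c l} : Finset (Fin n)) = {i, j} := by
      ext l
      rcases eq_or_ne l j with rfl | hlj
      · simp [hy]
      · simp [Function.update_of_ne hlj, hmem]
    refine Finset.mem_image.2 ⟨c, ?_, hset⟩
    simp only [mem_filter, mem_univ, true_and]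
    refine ⟨hc, ?_⟩
    rw [hammingDist, hset, Finset.card_pair hij]
  have hcover : powersetCard 2 ({i, j} : Finset (Fin n))ᶜ ⊆
      (univ.erase (c j)).biUnion fun y => (P (Function.update v j y)).erase {i, j} := by
    intro p hp
    obtain ⟨hpsub, hpcard⟩ := mem_powersetCard.1 hp
    have hip : i ∉ p := fun h => by simpa using hpsub h
    have hjp : j ∉ p := fun h => by simpa using hpsub h
    have hins : #(insert j p) = 3 := by rw [Finset.card_insert_of_notMem hjp, hpcard]
    have h3 : 3 ≤ n := by
      rw [← hins]; exact (Finset.card_le_univ _).trans (by simp)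
    obtain ⟨c', hc', hag⟩ := exists_mem_eqOn hk hd (insert j p)ᶜ (by
      rw [Finset.card_compl, hins, Fintype.card_fin]; omega) v
    have hci : c' i = v i := hag i (by simp [hip, hij])
    have hne : c ≠ c' := by
      rintro rfl
      exact (hmem i).2 (Or.inl rfl) hci.symm
    have hsub : ({l | c l ≠ c' l} : Finset (Fin n)) ⊆ insert i (insert j p) := by
      intro l hl
      simp only [mem_filter, mem_univ, true_and] at hl
      by_contra hl'
      simp only [mem_insert, not_or] at hl'
      have h1 : c' l = v l := hag l (by simp [hl'])
      have h2 : ¬ v l ≠ c l := by rw [hmem]; tauto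
      push Not at h2
      exact hl (h2.symm.trans h1.symm)
    have h4 : 4 ≤ hammingDist c c' := by
      by_contra! h
      exact hne (eq_of_hammingDist_lt hd hc hc' h)
    -- `c` and `c'` can differ only in four positions, so they differ in all four.
    have heq : ({l | c l ≠ c' l} : Finset (Fin n)) = insert i (insert j p) := by
      refine Finset.eq_of_subset_of_card_le hsub ?_
      rw [Finset.card_insert_of_notMem (by simp [hip, hij]), hins]
      exact h4
    have hdiff : ∀ l, l = i ∨ l = j ∨ l ∈ p → c l ≠ c' l := by
      intro l hl
      have : l ∈ ({l | c l ≠ c' l} : Finset (Fin n)) := by rw [heq]; simpa using hl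
      simpa using this
    have hset : ({l | Function.update v j (c' j) l ≠ c' l} : Finset (Fin n)) = p := by
      ext l
      simp only [mem_filter, mem_univ, true_and]
      rcases eq_or_ne l j with rfl | hlj
      · simp [hjp]
      · rw [Function.update_of_ne hlj]
        constructor
        · intro h
          by_contra hlp
          exact h (hag l (by simp [hlj, hlp])).symm
        · intro hlp
          have hli : l ≠ i := by rintro rfl; exact hip hlp
          have h2 : ¬ v l ≠ c l := by rw [hmem]; tauto
          push Not at h2
          rw [h2]
          exact hdiff l (by tauto)
    refine Finset.mem_biUnion.2 ⟨c' j, ?_, Finset.mem_erase.2 ⟨?_, ?_⟩⟩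
    · simpa using (hdiff j (by tauto)).symm
    · rintro rfl
      simp at hip
    · refine Finset.mem_image.2 ⟨c', ?_, hset⟩
      simp only [mem_filter, mem_univ, true_and]
      refine ⟨hc', ?_⟩
      rw [hammingDist, hset, hpcard]
  have hcount := (Finset.card_le_card hcover).trans Finset.card_biUnion_le
  rw [Finset.card_powersetCard, Finset.card_compl, Fintype.card_fin, Finset.card_pair hij]
    at hcount
  obtain ⟨r, hr⟩ := heven
  have hvup : Function.update v j (v j) = v := Function.update_eq_self j v
  have hvj : v j ∈ univ.erase (c j) := by simpa using (hmem j).2 (Or.inr rfl)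
  have hq : 2 ≤ Fintype.card F := by
    have : Nontrivial F := inferInstance
    exact Fintype.one_lt_card
  have hle : ∀ y ∈ univ.erase (c j), #((P (Function.update v j y)).erase {i, j}) ≤ r - 1 := by
    intro y hy
    rw [Finset.card_erase_of_mem (hPij y (by simpa using hy))]
    have := hP (Function.update v j y)
    have := hub (Function.update v j y)
    omega
  by_contra hcon
  have hlt : #((P (Function.update v j (v j))).erase {i, j}) < r - 1 := by
    rw [Finset.card_erase_of_mem (hPij _ (by simpa using hvj)), hvup]
    have h1 := hP v
    have h2 := hub v
    have h3 : 0 < #(P v) := by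
      have := hPij (v j) (by simpa using hvj)
      rw [hvup] at this
      exact Finset.card_pos.2 ⟨_, this⟩
    omega
  have hsum := Finset.sum_lt_sum hle ⟨v j, hvj, hlt⟩
  rw [Finset.sum_const, Finset.card_erase_of_mem (mem_univ _), Finset.card_univ, smul_eq_mul]
    at hsum
  have hch : (n - 2).choose 2 = (Fintype.card F - 1) * (r - 1) := by
    obtain ⟨s, rfl⟩ : ∃ s, r = s + 1 := ⟨r - 1, by omega⟩
    have e1 : n - 2 = 2 * s + 1 := by omega
    have e2 : Fintype.card F - 1 = 2 * s + 1 := by omega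
    rw [e1, e2, Nat.choose_two_right]
    simp only [Nat.add_sub_cancel]
    rw [show (2 * s + 1) * (2 * s) = (2 * s + 1) * s * 2 by ring]
    simp
  omega

lemma numAt_of_distTo_le_one [Fintype F] (hd : ∀ c ∈ C, c ≠ 0 → 4 ≤ hammingNorm c)
    (v : Fin n → F) (hv : distTo (C : Set (Fin n → F)) v ≤ 1) (t : ℕ) (ht : t ≤ 2) :
    numAt (C : Set (Fin n → F)) v t
      = if t = distTo (C : Set (Fin n → F)) v then 1 else 0 := by
  obtain ⟨c, hc, hcv⟩ := exists_distTo (C := (C : Set (Fin n → F))) ⟨0, C.zero_mem⟩ v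
  have huniq : ∀ c' ∈ C, hammingDist v c' = t → c' = c := by
    intro c' hc' h
    apply eq_of_hammingDist_lt hd hc' hc
    have := hammingDist_triangle_left c' c v
    omega
  split_ifs with h
  · rw [numAt, Set.ncard_eq_one]
    refine ⟨c, ?_⟩
    ext c'
    simp only [SetLike.mem_coe, Set.mem_ofPred_eq, Set.mem_singleton_iff]
    constructor
    · rintro ⟨h1, h2⟩
      exact huniq c' h1 h2
    · rintro rfl
      exact ⟨hc, by omega⟩
  · rw [numAt, Set.ncard_eq_zero]
    ext c'
    simp only [SetLike.mem_coe, Set.mem_ofPred_eq, Set.mem_empty_iff_false, iff_false, not_and]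
    intro h1 h2
    have := huniq c' h1 h2
    subst this
    omega

lemma completelyRegular_of_mds [Fintype F] (hk : Module.finrank F C + 3 = n)
    (hd : ∀ c ∈ C, c ≠ 0 → 4 ≤ hammingNorm c) (hn : n = Fintype.card F + 1)
    (heven : Even (Fintype.card F)) : CompletelyRegular (C : Set (Fin n → F)) := by
  intro u v huv t
  refine numAt_eq_of_le_two hk hd u v (fun t ht => ?_) t
  rcases Nat.lt_or_ge t (distTo (C : Set (Fin n → F)) v) with h | h
  · rw [numAt_eq_zero_of_lt h, numAt_eq_zero_of_lt (huv ▸ h)]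
  rcases Nat.lt_or_ge 1 (distTo (C : Set (Fin n → F)) v) with h1 | h1
  · have hv : distTo (C : Set (Fin n → F)) v = 2 := by omega
    have ht2 : t = 2 := by omega
    subst ht2
    have e1 := numAt_two_eq hk hd hn heven v hv
    have e2 := numAt_two_eq hk hd hn heven u (huv.trans hv)
    omega
  · rw [numAt_of_distTo_le_one hd v h1 t ht, numAt_of_distTo_le_one hd u (huv ▸ h1) t ht, huv]

/-- The Singleton bound, for codimension three. -/
lemma exists_hammingNorm_le (hk : Module.finrank F C + 3 = n) (hn : 4 ≤ n) :
    ∃ c ∈ C, c ≠ 0 ∧ hammingNorm c ≤ 4 := by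
  obtain ⟨S, -, hS⟩ := Finset.exists_superset_card_eq (s := (∅ : Finset (Fin n))) (n := n - 4)
    (by simp) (by simp)
  let f : C →ₗ[F] (S → F) := (LinearMap.funLeft F F (Subtype.val : S → Fin n)).comp C.subtype
  have hf : LinearMap.ker f ≠ ⊥ := LinearMap.ker_ne_bot_of_finrank_lt (by
    rw [Module.finrank_pi, Fintype.card_coe]; omega)
  obtain ⟨⟨c, hc⟩, h0, hne⟩ := Submodule.exists_mem_ne_zero_of_ne_bot hf
  refine ⟨c, hc, by simpa using hne, ?_⟩
  have : hammingNorm c ≤ #Sᶜ := by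
    refine Finset.card_le_card fun i hi => ?_
    simp only [Finset.mem_filter, Finset.mem_univ, true_and] at hi
    rw [Finset.mem_compl]
    intro hiS
    exact hi (congrFun h0 ⟨i, hiS⟩)
  rw [Finset.card_compl, Fintype.card_fin] at this
  omega

end MDS

/-! ### The extended Reed–Solomon code -/

section Existence

open Polynomial

variable {F : Type*} [Field F]

/-- Evaluation of polynomials at the points of the projective line over `F`: at `x : F` it is the
value of the polynomial, at infinity (`none`) the coefficient of degree `d`. -/
noncomputable def projEval (d : ℕ) : F[X] →ₗ[F] (Option F → F) :=
  LinearMap.pi fun o => o.elim (Polynomial.lcoeff F d) Polynomial.leval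

lemma card_zeros_projEval_le [Fintype F] [DecidableEq F] (d : ℕ) (f : F[X]) (hf : f ≠ 0)
    (hdeg : f.natDegree ≤ d) : #{o | projEval d f o = 0} ≤ d := by
  have hroots : #(f.roots.toFinset) ≤ f.natDegree :=
    (Multiset.toFinset_card_le _).trans f.card_roots'
  have hval : ∀ x, projEval d f (some x) = f.eval x := fun x => rfl
  rcases Nat.lt_or_ge f.natDegree d with h | h
  · have : ({o | projEval d f o = 0} : Finset (Option F)) ⊆ insertNone f.roots.toFinset := by
      rintro (_ | x) ho
      · simp
      · simp only [mem_filter, mem_univ, true_and, hval] at ho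
        simpa [hf] using ho
    have := Finset.card_le_card this
    rw [Finset.card_insertNone] at this
    omega
  · have hd : f.natDegree = d := le_antisymm hdeg h
    have : ({o | projEval d f o = 0} : Finset (Option F)) ⊆
        f.roots.toFinset.map Function.Embedding.some := by
      rintro (_ | x) ho
      · simp only [mem_filter, mem_univ, true_and, ← hd] at ho
        exact absurd (leadingCoeff_eq_zero.1 ho) hf
      · simp only [mem_filter, mem_univ, true_and, hval] at ho
        simpa [hf] using ho
    have := Finset.card_le_card this
    rw [Finset.card_map] at this
    omega

/-- The extended Reed–Solomon code has dimension `q - 2` and minimum distance at least four. -/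
lemma exists_mds [Fintype F] [DecidableEq F] {n : ℕ} (hn : n = Fintype.card F + 1)
    (hq : 4 ≤ Fintype.card F) :
    ∃ C : Submodule F (Fin n → F), Module.finrank F C + 3 = n ∧
      ∀ c ∈ C, c ≠ 0 → 4 ≤ hammingNorm c := by
  obtain ⟨e⟩ : Nonempty (Fin n ≃ Option F) := ⟨Fintype.equivOfCardEq (by simp [hn])⟩
  let d := Fintype.card F - 3
  let g : degreeLT F (d + 1) →ₗ[F] (Fin n → F) :=
    (LinearMap.funLeft F F e).comp ((projEval d).comp (degreeLT F (d + 1)).subtype)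
  have hw : ∀ f : degreeLT F (d + 1), f ≠ 0 → 4 ≤ hammingNorm (g f) := by
    rintro ⟨f, hf⟩ hne
    have hf0 : f ≠ 0 := by simpa using hne
    have hdeg : f.natDegree ≤ d := by
      have := (natDegree_lt_iff_degree_lt hf0).2 (mem_degreeLT.1 hf)
      omega
    have hz := card_zeros_projEval_le d f hf0 hdeg
    have hz' : #{i | g ⟨f, hf⟩ i = 0} = #{o | projEval d f o = 0} :=
      Finset.card_equiv e fun i => by
        simp only [mem_filter, mem_univ, true_and]
        rfl
    have := Finset.card_filter_add_card_filter_not (s := (univ : Finset (Fin n)))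
      (p := fun i => g ⟨f, hf⟩ i = 0)
    simp only [Finset.card_univ, Fintype.card_fin] at this
    simp only [hammingNorm, ne_eq]
    omega
  have hinj : Function.Injective g := by
    rw [injective_iff_map_eq_zero]
    intro f h0
    by_contra hne
    have := hw f hne
    rw [h0, hammingNorm_zero] at this
    omega
  refine ⟨LinearMap.range g, ?_, ?_⟩
  · rw [LinearMap.finrank_range_of_inj hinj, (degreeLTEquiv F (d + 1)).finrank_eq,
      Module.finrank_fin_fun]
    omega
  · rintro _ ⟨f, rfl⟩ hne
    exact hw f (by rintro rfl; simp at hne)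

end Existence

/-- For `m > 1` and `q = 2^m`, every linear `[q+1, q-2, 4]_q` code (these are
MDS) is uniformly packed in the wide sense, and moreover there exists such a
code that is completely regular. -/
theorem stmt_14 {m : ℕ} (hm : 1 < m)
    {F : Type*} [Field F] [Fintype F] [DecidableEq F]
    (hF : Fintype.card F = 2 ^ m) :
    (∀ C : Submodule F (Fin (2 ^ m + 1) → F),
        IsLinearCode C (2 ^ m - 2) 4 →
          UPWS (C : Set (Fin (2 ^ m + 1) → F))) ∧
    (∃ C : Submodule F (Fin (2 ^ m + 1) → F),
        IsLinearCode C (2 ^ m - 2) 4 ∧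
          CompletelyRegular (C : Set (Fin (2 ^ m + 1) → F))) := by
  have hq : 4 ≤ 2 ^ m := by
    calc 4 = 2 ^ 2 := by norm_num
      _ ≤ 2 ^ m := Nat.pow_le_pow_right (by norm_num) hm
  have heven : Even (Fintype.card F) := by
    rw [hF]
    exact (even_two).pow_of_ne_zero (by omega)
  have hcr : ∀ C : Submodule F (Fin (2 ^ m + 1) → F), IsLinearCode C (2 ^ m - 2) 4 →
      CompletelyRegular (C : Set (Fin (2 ^ m + 1) → F)) := fun C hC =>
    completelyRegular_of_mds (by rw [hC.1]; omega)
      (fun c hc hne => hC.2.2 ⟨c, hc, hne, rfl⟩) (by rw [hF]) heven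
  refine ⟨fun C hC => (hcr C hC).upws ⟨0, C.zero_mem⟩, ?_⟩
  obtain ⟨C, hk, hd⟩ := exists_mds (F := F) (n := 2 ^ m + 1) (by rw [hF]) (by omega)
  have hC : IsLinearCode C (2 ^ m - 2) 4 := by
    refine ⟨by omega, ?_, ?_⟩
    · obtain ⟨c, hc, hne, hle⟩ := exists_hammingNorm_le hk (by omega)
      exact ⟨c, hc, hne, le_antisymm hle (hd c hc hne)⟩
    · rintro _ ⟨c, hc, hne, rfl⟩
      exact hd c hc hne
  exact ⟨C, hC, hcr C hC⟩
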